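/- Let p > 0, q < 0 and ξ₀ be real numbers. Then for all ξ with ξ + ξ₀ > 0, the function Φ(ξ) = ln(√(−p/q)·tanh(√(−pq)(ξ+ξ₀))) is differentiable and satisfies the auxiliary ODE Φ'(ξ) = p·exp(−Φ(ξ)) + q·exp(Φ(ξ)) (i.e. the case r = 0 with pq < 0). -/

import Mathlib

/-!
If `u > 0` solves the Riccati equation `u' = p + r u + q u²`, dividing by `u` shows that `Φ = log u`
solves `Φ' = p exp (-Φ) + q exp Φ + r`. For `r = 0` and `q < 0 < p`, the equation `t' = 1 - t²` for
`t = tanh` rescales to the Riccati equation for `u ξ = a tanh (k (ξ + ξ₀))` as soon as `a k = p` and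
`q a² = -p`, which is what `a = √(-p / q)` and `k = √(-(p q))` achieve.
-/

lemma hasDerivAt_tanh (x : ℝ) : HasDerivAt Real.tanh (1 - Real.tanh x ^ 2) x := by
  have hcosh : Real.cosh x ≠ 0 := (Real.cosh_pos x).ne'
  have hquot : Real.tanh = fun y => Real.sinh y / Real.cosh y := funext Real.tanh_eq_sinh_div_cosh
  rw [hquot]
  refine ((Real.hasDerivAt_sinh x).fun_div (Real.hasDerivAt_cosh x) hcosh).congr_deriv ?_
  field_simp

lemma tanh_pos {x : ℝ} (hx : 0 < x) : 0 < Real.tanh x := by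
  rw [Real.tanh_eq_sinh_div_cosh]
  exact div_pos (Real.sinh_pos_iff.mpr hx) (Real.cosh_pos x)

lemma hasDerivAt_log_of_riccati {u : ℝ → ℝ} {p q r ξ : ℝ}
    (hu : HasDerivAt u (p + r * u ξ + q * u ξ ^ 2) ξ) (hpos : 0 < u ξ) :
    HasDerivAt (fun ξ' => Real.log (u ξ'))
      (p * Real.exp (-Real.log (u ξ)) + q * Real.exp (Real.log (u ξ)) + r) ξ := by
  refine (hu.log hpos.ne').congr_deriv ?_
  rw [Real.exp_neg, Real.exp_log hpos]
  field_simp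
  ring

lemma hasDerivAt_mul_tanh_riccati {a k p q : ℝ} (hak : a * k = p) (hqa : q * a ^ 2 = -p)
    (ξ₀ ξ : ℝ) :
    HasDerivAt (fun ξ' => a * Real.tanh (k * (ξ' + ξ₀)))
      (p + q * (a * Real.tanh (k * (ξ + ξ₀))) ^ 2) ξ := by
  have hlin : HasDerivAt (fun ξ' => k * (ξ' + ξ₀)) k ξ := by
    simpa only [id, mul_one] using ((hasDerivAt_id ξ).add_const ξ₀).const_mul k
  refine (((hasDerivAt_tanh _).comp ξ hlin).const_mul a).congr_deriv ?_
  set t := Real.tanh (k * (ξ + ξ₀))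
  calc a * ((1 - t ^ 2) * k)
      = a * k * (1 - t ^ 2) := by ring
    _ = p + -p * t ^ 2 := by rw [hak]; ring
    _ = p + q * (a * t) ^ 2 := by rw [← hqa]; ring

lemma sqrt_neg_div_mul_sqrt_neg_mul {p q : ℝ} (hq : q ≠ 0) (hpq : 0 ≤ -p / q) :
    √(-p / q) * √(-(p * q)) = |p| := by
  have hsq : -p / q * -(p * q) = p ^ 2 := by field_simp
  rw [← Real.sqrt_mul hpq, hsq, Real.sqrt_sq_eq_abs]

lemma mul_sqrt_neg_div_sq {p q : ℝ} (hq : q ≠ 0) (hpq : 0 ≤ -p / q) :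
    q * √(-p / q) ^ 2 = -p := by
  rw [Real.sq_sqrt hpq, mul_div_cancel₀ _ hq]

/-- Type 2 solution (9g) of the auxiliary ODE Φ' = p·exp(-Φ) + q·exp(Φ)
with r = 0 and p > 0, q < 0 (so pq < 0). -/
theorem stmt_6 (p q ξ₀ : ℝ) (hp : p > 0) (hq : q < 0) :
    ∀ ξ : ℝ, ξ + ξ₀ > 0 →
      HasDerivAt
        (fun ξ' => Real.log (Real.sqrt (-p / q) * Real.tanh (Real.sqrt (-(p * q)) * (ξ' + ξ₀))))
        (p * Real.exp (-Real.log (Real.sqrt (-p / q) * Real.tanh (Real.sqrt (-(p * q)) * (ξ + ξ₀))))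
          + q * Real.exp (Real.log (Real.sqrt (-p / q) * Real.tanh (Real.sqrt (-(p * q)) * (ξ + ξ₀))))) ξ := by
  intro ξ hξ
  have hquot : 0 < -p / q := div_pos_of_neg_of_neg (neg_lt_zero.mpr hp) hq
  have hprod : 0 < -(p * q) := neg_pos.mpr (mul_neg_of_pos_of_neg hp hq)
  have hak : √(-p / q) * √(-(p * q)) = p :=
    (sqrt_neg_div_mul_sqrt_neg_mul hq.ne hquot.le).trans (abs_of_pos hp)
  have hriccati := hasDerivAt_mul_tanh_riccati hak (mul_sqrt_neg_div_sq hq.ne hquot.le) ξ₀ ξ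
  have hpos : 0 < √(-p / q) * Real.tanh (√(-(p * q)) * (ξ + ξ₀)) :=
    mul_pos (Real.sqrt_pos.mpr hquot) (tanh_pos (mul_pos (Real.sqrt_pos.mpr hprod) hξ))
  simpa only [add_zero] using
    hasDerivAt_log_of_riccati (r := 0) (hriccati.congr_deriv (by ring)) hpos
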